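/- arXiv:2005.02695 — 2 statements merged into one kernel-verified Lean document; each statement's English description precedes it below -/
import Mathlib

section
/- Let M be a nonzero linear subspace of Hol(𝔻) and let λ ∈ 𝔻. Then the following two conditions are equivalent: (i) λ ∉ Z(M) and the quotient space M/((S−λI)(M) ∩ M) has dimension 1; (ii) the function f_λ belongs to M for every f ∈ M such that f(λ) = 0. -/
noncomputable section

open Metric Set Filter Topology
open scoped Classical

/-- Functions holomorphic on the open unit disc, normalized to vanish outside it.
This is our model of `Hol(𝔻)`. -/
def HolDisc : Set (ℂ → ℂ) :=
  {f | DifferentiableOn ℂ f (Metric.ball (0:ℂ) 1) ∧ ∀ z ∉ Metric.ball (0:ℂ) 1, f z = 0}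

/-- The constant function `1` of `Hol(𝔻)` (normalized to vanish outside the disc). -/
def oneD : ℂ → ℂ := fun z => if z ∈ Metric.ball (0:ℂ) 1 then 1 else 0

/-- The shift `S`, `(Sf)(z) = z f(z)`, as a linear map. -/
def shiftL : (ℂ → ℂ) →ₗ[ℂ] (ℂ → ℂ) where
  toFun f := fun z => z * f z
  map_add' f g := by funext z; simp [mul_add]
  map_smul' c f := by funext z; simp [smul_eq_mul]; ring

/-- Division: `f_λ(z) = (f(z) - f(λ))/(z - λ)` for `z ≠ λ`, `f_λ(λ) = f'(λ)`,
normalized to vanish outside the disc.  `fdivB 0` is the backward shift `T`. -/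
def fdivB (lam : ℂ) (f : ℂ → ℂ) : ℂ → ℂ := fun z =>
  if z ∈ Metric.ball (0:ℂ) 1 then
    (if z = lam then deriv f lam else (f z - f lam) / (z - lam))
  else 0

/-- The reflected model of the shift `S⁻` on `H₀(ℂ ∖ 𝔻̄)`: a function `h` on `{|ζ|>1}`
vanishing at `∞` is represented by `k(w) = h(1/w)` (holomorphic on `𝔻`, `k 0 = 0`);
`S⁻` corresponds to `k ↦ (k(z) - k(0))/z - k'(0)·1`. -/
def negShiftF (k : ℂ → ℂ) : ℂ → ℂ := fun z => fdivB 0 k z - deriv k 0 * oneD z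

/-- `n`-th Taylor coefficient at the origin. -/
def tCoeff (n : ℕ) (f : ℂ → ℂ) : ℂ := iteratedDeriv n f 0 / (Nat.factorial n)

/-!
The subspace `(S - λ)M ∩ M` lies in the kernel of evaluation at `λ`, and `f ∈ M` belongs to it
exactly when `f(λ) = 0` and `f_λ ∈ M`. When evaluation at `λ` is nonzero on `M`, its kernel is a
hyperplane, so the quotient is one-dimensional exactly when `(S - λ)M ∩ M` is the whole kernel,
which is (ii). That evaluation is nonzero under (ii) is an infinite descent: if every function in
`M` vanished at `λ`, dividing by `z - λ` could be repeated forever inside `M`, so every function in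
`M` would have a zero of infinite order at `λ`.
-/

section LinearAlgebra

variable {K V : Type*} [DivisionRing K] [AddCommGroup V] [Module K V]

lemma rank_quotient_eq_one_iff_isCoatom {N : Submodule K V} :
    Module.rank K (V ⧸ N) = 1 ↔ IsCoatom N := by
  rw [Module.rank_eq_one_iff_finrank_eq_one, ← isSimpleModule_iff_finrank_eq_one,
    isSimpleModule_iff_isCoatom]

lemma rank_quotient_eq_one_iff_eq_ker {φ : V →ₗ[K] K} (hφ : φ ≠ 0) {N : Submodule K V}
    (hN : N ≤ LinearMap.ker φ) : Module.rank K (V ⧸ N) = 1 ↔ N = LinearMap.ker φ := by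
  have hker : IsCoatom (LinearMap.ker φ) :=
    LinearMap.isCoatom_ker_of_surjective (LinearMap.surjective hφ)
  rw [rank_quotient_eq_one_iff_isCoatom]
  constructor
  · exact fun hcoatom => (hcoatom.le_iff_eq hker.ne_top).1 hN |>.symm
  · rintro rfl
    exact hker

end LinearAlgebra

section Division

variable {f g : ℂ → ℂ} {lam : ℂ}

lemma fdivB_eq_indicator_dslope (lam : ℂ) (f : ℂ → ℂ) :
    fdivB lam f = (ball (0 : ℂ) 1).indicator (dslope f lam) := by
  funext z
  by_cases hz : z = lam
  · simp [fdivB, indicator, hz]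
  · simp [fdivB, indicator, hz, dslope_of_ne, slope_def_field]

lemma sub_mul_fdivB (hf : ∀ z ∉ ball (0 : ℂ) 1, f z = 0) (hf0 : f lam = 0) (z : ℂ) :
    (z - lam) * fdivB lam f z = f z := by
  rw [fdivB_eq_indicator_dslope]
  by_cases hz : z ∈ ball (0 : ℂ) 1
  · rw [indicator_of_mem hz, ← smul_eq_mul, sub_smul_dslope, hf0, sub_zero]
  · rw [indicator_of_notMem hz, mul_zero, hf z hz]

lemma fdivB_sub_mul (hg : g ∈ HolDisc) : fdivB lam (fun z => (z - lam) * g z) = g := by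
  rw [fdivB_eq_indicator_dslope]
  funext z
  by_cases hz : z ∈ ball (0 : ℂ) 1
  · rw [indicator_of_mem hz]
    obtain rfl | hne := eq_or_ne z lam
    · have hd : DifferentiableAt ℂ g z := hg.1.differentiableAt (isOpen_ball.mem_nhds hz)
      have hderiv : HasDerivAt (fun w => (w - z) * g w) (g z) z := by
        simpa using ((hasDerivAt_id z).sub_const z).fun_mul hd.hasDerivAt
      rw [dslope_same, hderiv.deriv]
    · exact dslope_sub_smul_of_ne g hne
  · rw [indicator_of_notMem hz, hg.2 z hz]

lemma fdivB_mem_holDisc (hf : f ∈ HolDisc) (hlam : lam ∈ ball (0 : ℂ) 1) :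
    fdivB lam f ∈ HolDisc := by
  rw [fdivB_eq_indicator_dslope]
  have hdiff : DifferentiableOn ℂ (dslope f lam) (ball 0 1) :=
    (Complex.differentiableOn_dslope (isOpen_ball.mem_nhds hlam)).2 hf.1
  exact ⟨hdiff.congr fun z hz => indicator_of_mem hz _, fun z hz => indicator_of_notMem hz _⟩

end Division

section VanishingOrder

variable {f : ℂ → ℂ} {lam : ℂ}

lemma analyticOnNhd_of_mem_holDisc (hf : f ∈ HolDisc) : AnalyticOnNhd ℂ f (ball 0 1) :=
  hf.1.analyticOnNhd isOpen_ball

lemma eq_zero_of_analyticOrderAt_eq_top (hf : f ∈ HolDisc) (hlam : lam ∈ ball (0 : ℂ) 1)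
    (htop : analyticOrderAt f lam = ⊤) : f = 0 := by
  have hzero : EqOn f 0 (ball 0 1) :=
    (analyticOnNhd_of_mem_holDisc hf).eqOn_zero_of_preconnected_of_eventuallyEq_zero
      (convex_ball 0 1).isPreconnected hlam (analyticOrderAt_eq_top.1 htop)
  funext z
  by_cases hz : z ∈ ball (0 : ℂ) 1
  · exact hzero hz
  · exact hf.2 z hz

lemma analyticOrderAt_eq_one_add_fdivB (hf : f ∈ HolDisc) (hlam : lam ∈ ball (0 : ℂ) 1)
    (hf0 : f lam = 0) : analyticOrderAt f lam = 1 + analyticOrderAt (fdivB lam f) lam := by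
  have hfactor : f = (fun z => z - lam) * fdivB lam f :=
    funext fun z => (sub_mul_fdivB hf.2 hf0 z).symm
  have hanalytic : AnalyticAt ℂ (fdivB lam f) lam :=
    analyticOnNhd_of_mem_holDisc (fdivB_mem_holDisc hf hlam) lam hlam
  calc analyticOrderAt f lam
      = analyticOrderAt ((fun z => z - lam) * fdivB lam f) lam :=
        congrArg (analyticOrderAt · lam) hfactor
    _ = analyticOrderAt (fun z => z - lam) lam + analyticOrderAt (fdivB lam f) lam :=
        analyticOrderAt_mul (by fun_prop) hanalytic
    _ = 1 + analyticOrderAt (fdivB lam f) lam := by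
        congr 1
        exact analyticOrderAt_id_sub_const_self

lemma analyticOrderAt_eq_top_of_mapsTo_fdivB {F : Set (ℂ → ℂ)} (hF : F ⊆ HolDisc)
    (hlam : lam ∈ ball (0 : ℂ) 1) (hzero : ∀ f ∈ F, f lam = 0) (hdiv : MapsTo (fdivB lam) F F)
    (hf : f ∈ F) : analyticOrderAt f lam = ⊤ := by
  have hle (n : ℕ) : ∀ g ∈ F, (n : ℕ∞) ≤ analyticOrderAt g lam := by
    induction n with
    | zero => simp
    | succ n ih =>
      intro g hg
      rw [analyticOrderAt_eq_one_add_fdivB (hF hg) hlam (hzero g hg), Nat.cast_succ, add_comm]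
      gcongr
      exact ih _ (hdiv hg)
  exact ENat.eq_top_iff_forall_ge.2 fun n => hle n f hf

end VanishingOrder

section Subspace

variable {M : Submodule ℂ (ℂ → ℂ)} {lam : ℂ}

lemma exists_mem_apply_ne_zero (hM : (M : Set (ℂ → ℂ)) ⊆ HolDisc) (hM0 : M ≠ ⊥)
    (hlam : lam ∈ ball (0 : ℂ) 1) (hdiv : ∀ f ∈ M, f lam = 0 → fdivB lam f ∈ M) :
    ∃ f ∈ M, f lam ≠ 0 := by
  by_contra! hzero
  refine hM0 ((Submodule.eq_bot_iff M).2 fun f hf => ?_)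
  exact eq_zero_of_analyticOrderAt_eq_top (hM hf) hlam <|
    analyticOrderAt_eq_top_of_mapsTo_fdivB hM hlam hzero (fun g hg => hdiv g hg (hzero g hg)) hf

/-- Evaluation at `lam` as a linear functional on `M`; its kernel is to be compared with the
subspace `(S - λI)(M) ∩ M`. -/
def evalOn (M : Submodule ℂ (ℂ → ℂ)) (lam : ℂ) : M →ₗ[ℂ] ℂ :=
  (LinearMap.proj lam).domRestrict M

lemma mem_ker_evalOn {f : M} : f ∈ LinearMap.ker (evalOn M lam) ↔ f.1 lam = 0 := Iff.rfl

lemma evalOn_ne_zero_iff : evalOn M lam ≠ 0 ↔ ∃ f ∈ M, f lam ≠ 0 := by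
  simp [evalOn, LinearMap.ext_iff]

/-- The subspace `(S - λI)(M) ∩ M`, regarded as a subspace of `M` so that one can form the quotient
of `M` by it. -/
abbrev shiftedInter (M : Submodule ℂ (ℂ → ℂ)) (lam : ℂ) : Submodule ℂ M :=
  Submodule.comap M.subtype
    (Submodule.map (shiftL - lam • (LinearMap.id : (ℂ → ℂ) →ₗ[ℂ] (ℂ → ℂ))) M ⊓ M)

lemma mem_shiftedInter {f : M} :
    f ∈ shiftedInter M lam ↔ ∃ g ∈ M, (fun z => (z - lam) * g z) = f.1 := by
  have hshift (g : ℂ → ℂ) :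
      (shiftL - lam • (LinearMap.id : (ℂ → ℂ) →ₗ[ℂ] (ℂ → ℂ))) g = fun z => (z - lam) * g z := by
    funext z
    simp [shiftL, sub_mul]
  simp only [Submodule.mem_comap, Submodule.mem_inf, Submodule.mem_map, Submodule.subtype_apply,
    hshift, f.2, and_true]

lemma mem_shiftedInter_iff_fdivB_mem (hM : (M : Set (ℂ → ℂ)) ⊆ HolDisc) {f : M} :
    f ∈ shiftedInter M lam ↔ f.1 lam = 0 ∧ fdivB lam f ∈ M := by
  rw [mem_shiftedInter]
  constructor
  · rintro ⟨g, hg, hfg⟩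
    rw [← hfg, fdivB_sub_mul (hM hg)]
    exact ⟨by simp, hg⟩
  · rintro ⟨hf0, hdiv⟩
    exact ⟨fdivB lam f, hdiv, funext (sub_mul_fdivB (hM f.2).2 hf0)⟩

lemma shiftedInter_le_ker_evalOn : shiftedInter M lam ≤ LinearMap.ker (evalOn M lam) := by
  intro f hf
  obtain ⟨g, -, hfg⟩ := mem_shiftedInter.1 hf
  rw [mem_ker_evalOn, ← hfg]
  simp

lemma shiftedInter_eq_ker_evalOn_iff (hM : (M : Set (ℂ → ℂ)) ⊆ HolDisc) :
    shiftedInter M lam = LinearMap.ker (evalOn M lam) ↔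
      ∀ f ∈ M, f lam = 0 → fdivB lam f ∈ M := by
  simp only [Submodule.ext_iff, mem_shiftedInter_iff_fdivB_mem hM, mem_ker_evalOn,
    and_iff_left_iff_imp, Subtype.forall]

end Subspace

/-- Let `M` be a nonzero linear subspace of `Hol(𝔻)` and `λ ∈ 𝔻`.
The following are equivalent:
(i) `λ ∉ Z(M)` and `dim M/((S-λI)(M) ∩ M) = 1`;
(ii) `f_λ ∈ M` for every `f ∈ M` with `f(λ) = 0`. -/
theorem statement0 (M : Submodule ℂ (ℂ → ℂ)) (hMhol : (M : Set (ℂ → ℂ)) ⊆ HolDisc)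
    (hM0 : M ≠ ⊥) (lam : ℂ) (hlam : lam ∈ Metric.ball (0:ℂ) 1) :
    ((∃ f ∈ M, f lam ≠ 0) ∧
      Module.rank ℂ
        (↥M ⧸ Submodule.comap M.subtype
          (Submodule.map (shiftL - lam • (LinearMap.id : (ℂ → ℂ) →ₗ[ℂ] (ℂ → ℂ))) M ⊓ M)) = 1)
    ↔ (∀ f ∈ M, f lam = 0 → fdivB lam f ∈ M) := by
  have hrank (heval : ∃ f ∈ M, f lam ≠ 0) :
      Module.rank ℂ (M ⧸ shiftedInter M lam) = 1 ↔ ∀ f ∈ M, f lam = 0 → fdivB lam f ∈ M :=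
    (rank_quotient_eq_one_iff_eq_ker (evalOn_ne_zero_iff.2 heval) shiftedInter_le_ker_evalOn).trans
      (shiftedInter_eq_ker_evalOn_iff hMhol)
  constructor
  · rintro ⟨heval, hone⟩
    exact (hrank heval).1 hone
  · intro hdiv
    have heval := exists_mem_apply_ne_zero hMhol hM0 hlam hdiv
    exact ⟨heval, (hrank heval).2 hdiv⟩
end
end

section
/- Let E ∈ 𝓔 and let M be a linear subspace of E having the division property. Then the closure of M in E also has the division property. -/
noncomputable section

open Metric Set Filter Topology
open scoped Classical

/-!
For `λ ∈ 𝔻` the resolvent operator `R = (1 - λT)⁻¹ T` is bounded on `E` and realizes division at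
`λ`: `R f = f_λ` for every `f`. Since `f - (S - λ) R f = f(λ) · 1`, evaluation at `λ` has closed
kernel and is therefore continuous. Subtracting from the elements of `M` their value at `λ` times a
fixed element of `M` taking the value `1` there, one sees that every `f` in the closure of `M` with
`f(λ) = 0` is a limit of elements of `M` vanishing at `λ`. On those `R` takes values in `M`, hence
`R f` lies in the closure of `M`.
-/

theorem topologicalClosure_inf_ker_le {𝕜 X : Type*} [DivisionRing 𝕜] [TopologicalSpace 𝕜]
    [AddCommGroup X] [Module 𝕜 X] [TopologicalSpace X] [IsTopologicalAddGroup X]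
    [ContinuousSMul 𝕜 X] (M : Submodule 𝕜 X) (φ : X →L[𝕜] 𝕜) :
    M.topologicalClosure ⊓ φ.ker ≤ (M ⊓ φ.ker).topologicalClosure := by
  rintro f ⟨hf, hφf : φ f = 0⟩
  by_cases hM : M ≤ φ.ker
  · rwa [inf_eq_left.mpr hM]
  obtain ⟨k, hk, hφk : φ k ≠ 0⟩ := SetLike.not_le_iff_exists.mp hM
  set h := (φ k)⁻¹ • k
  have hφh : φ h = 1 := by simp [h, hφk]
  have hproj : Continuous fun x => x - φ x • h := by fun_prop
  have hproj_mem : ∀ m ∈ M, m - φ m • h ∈ M ⊓ φ.ker := fun m hm =>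
    ⟨M.sub_mem hm (M.smul_mem _ (M.smul_mem _ hk)), by simp [hφh]⟩
  have hmem := map_mem_closure hproj hf hproj_mem
  rwa [hφf, zero_smul, sub_zero] at hmem

theorem isUnit_one_sub_smul_of_spectralRadius_le_one {𝕜 A : Type*} [NontriviallyNormedField 𝕜]
    [NormedRing A] [NormedAlgebra 𝕜 A] {a : A} (ha : spectralRadius 𝕜 a ≤ 1) {c : 𝕜}
    (hc : ‖c‖ < 1) : IsUnit (1 - c • a) := by
  refine spectrum.isUnit_one_sub_smul_of_lt_inv_radius ?_
  calc (‖c‖₊ : ENNReal) < 1 := mod_cast hc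
    _ ≤ (spectralRadius 𝕜 a)⁻¹ := ENNReal.one_le_inv.mpr ha

theorem sub_mul_eq_of_sub_smul_fdivB_zero_eq {F G : ℂ → ℂ} {lam : ℂ}
    (hlam : lam ∈ ball (0 : ℂ) 1) (h : G - lam • fdivB 0 G = fdivB 0 F) {z : ℂ}
    (hz : z ∈ ball (0 : ℂ) 1) : (z - lam) * G z = F z - F lam := by
  have hmul : ∀ w ∈ ball (0 : ℂ) 1, (w - lam) * G w = F w - F 0 - lam * G 0 := by
    intro w hw
    rcases eq_or_ne w 0 with rfl | hw0
    · ring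
    · have hGw := congrFun h w
      simp only [fdivB, Pi.sub_apply, Pi.smul_apply, smul_eq_mul, hw, hw0, if_true, if_false,
        sub_zero] at hGw
      field_simp at hGw
      linear_combination hGw
  linear_combination hmul z hz - hmul lam hlam

theorem hasDerivAt_of_eventually_sub_mul_eq {𝕜 : Type*} [NontriviallyNormedField 𝕜] {F G : 𝕜 → 𝕜}
    {a : 𝕜} (hG : ContinuousAt G a) (h : ∀ᶠ z in 𝓝 a, (z - a) * G z = F z - F a) :
    HasDerivAt F (G a) a := by
  rw [hasDerivAt_iff_tendsto_slope]
  refine (hG.tendsto.mono_left nhdsWithin_le_nhds).congr' ?_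
  filter_upwards [h.filter_mono nhdsWithin_le_nhds, self_mem_nhdsWithin] with z hz hza
  rw [slope_def_field, ← hz, mul_div_cancel_left₀ _ (sub_ne_zero.mpr hza)]

theorem eq_fdivB_of_sub_smul_fdivB_zero_eq {F G : ℂ → ℂ} {lam : ℂ}
    (hlam : lam ∈ ball (0 : ℂ) 1) (hG : ContinuousAt G lam)
    (h : G - lam • fdivB 0 G = fdivB 0 F) : G = fdivB lam F := by
  have hmul : ∀ z ∈ ball (0 : ℂ) 1, (z - lam) * G z = F z - F lam := fun z hz =>
    sub_mul_eq_of_sub_smul_fdivB_zero_eq hlam h hz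
  funext z
  by_cases hz : z ∈ ball (0 : ℂ) 1
  · rcases eq_or_ne z lam with rfl | hzlam
    · have hderiv : HasDerivAt F (G z) z :=
        hasDerivAt_of_eventually_sub_mul_eq hG (eventually_of_mem (isOpen_ball.mem_nhds hz) hmul)
      simp only [fdivB, hz, if_true, hderiv.deriv]
    · simp only [fdivB, hz, hzlam, if_true, if_false]
      rw [← hmul z hz, mul_div_cancel_left₀ _ (sub_ne_zero.mpr hzlam)]
  · simpa [fdivB, hz] using congrFun h z

theorem sub_shiftL_sub_smul_fdivB {F : ℂ → ℂ} (hF : ∀ z ∉ ball (0 : ℂ) 1, F z = 0) (lam : ℂ) :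
    F - (shiftL (fdivB lam F) - lam • fdivB lam F) = F lam • oneD := by
  funext z
  suffices F z - (z - lam) * fdivB lam F z = F lam * oneD z by
    simpa [shiftL, sub_mul] using this
  by_cases hz : z ∈ ball (0 : ℂ) 1
  · rcases eq_or_ne z lam with rfl | hzlam
    · simp [oneD, hz]
    · simp only [fdivB, oneD, hz, hzlam, if_true, if_false]
      rw [mul_div_cancel₀ _ (sub_ne_zero.mpr hzlam)]
      ring
  · simp [fdivB, oneD, hz, hF z hz]

theorem oneD_ne_zero : oneD ≠ 0 := fun h => by simpa [oneD] using congrFun h 0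

/-- The division property at `lam` of a subspace `M` of a space `X` of functions on the disc, where
`ι` sends an element of `X` to the function it stands for. -/
def DivisionPropertyAt {X : Type*} [AddCommGroup X] [Module ℂ X] (ι : X →ₗ[ℂ] (ℂ → ℂ)) (lam : ℂ)
    (M : Submodule ℂ X) : Prop :=
  ∀ f ∈ M, ι f lam = 0 → ∃ g ∈ M, ι g = fdivB lam (ι f)

section FunctionSpace

variable {X : Type*} [AddCommGroup X] [Module ℂ X] [TopologicalSpace X] [IsTopologicalAddGroup X]
  [ContinuousSMul ℂ X] {ι : X →ₗ[ℂ] (ℂ → ℂ)} {lam : ℂ}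

theorem exists_continuousLinearMap_eq_fdivB (hhol : ∀ f, ι f ∈ HolDisc) {T : X →L[ℂ] X}
    (hT : ∀ f, ι (T f) = fdivB 0 (ι f)) (hlam : lam ∈ ball (0 : ℂ) 1)
    (hunit : IsUnit (1 - lam • T)) : ∃ R : X →L[ℂ] X, ∀ f, ι (R f) = fdivB lam (ι f) := by
  obtain ⟨B, hB⟩ := hunit.exists_right_inv
  refine ⟨B * T, fun f => ?_⟩
  have hcont : ContinuousAt (ι ((B * T) f)) lam :=
    ((hhol _).1.differentiableAt (isOpen_ball.mem_nhds hlam)).continuousAt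
  refine eq_fdivB_of_sub_smul_fdivB_zero_eq hlam hcont ?_
  have hresolvent : (B * T) f - lam • T ((B * T) f) = T f := by
    simpa using DFunLike.congr_fun hB (T f)
  rw [← hT, ← hT, ← map_smul, ← map_sub, hresolvent]

theorem continuous_apply_of_eq_fdivB [T1Space X] (hinj : Function.Injective ι)
    (hhol : ∀ f, ι f ∈ HolDisc) {S R : X →L[ℂ] X} (hS : ∀ f, ι (S f) = shiftL (ι f))
    (hR : ∀ f, ι (R f) = fdivB lam (ι f)) : Continuous fun f => ι f lam := by
  let φ : X →ₗ[ℂ] ℂ := LinearMap.proj lam ∘ₗ ι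
  let P : X →L[ℂ] X := 1 - (S - lam • 1) * R
  have hP : ∀ f, ι (P f) = φ f • oneD := fun f => by
    simpa [P, φ, hS, hR] using sub_shiftL_sub_smul_fdivB (hhol f).2 lam
  have hker : φ.ker = P.ker := by
    ext f
    calc φ f = 0 ↔ φ f • oneD = 0 := by simp [oneD_ne_zero]
      _ ↔ P f = 0 := by rw [← hP, map_eq_zero_iff ι hinj]
  exact φ.continuous_of_isClosed_ker (hker ▸ P.isClosed_ker)

theorem DivisionPropertyAt.topologicalClosure_of_eq_fdivB (hinj : Function.Injective ι)
    {R : X →L[ℂ] X} (hR : ∀ f, ι (R f) = fdivB lam (ι f)) (heval : Continuous fun f => ι f lam)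
    {M : Submodule ℂ X} (hM : DivisionPropertyAt ι lam M) :
    DivisionPropertyAt ι lam M.topologicalClosure := by
  intro f hf hflam
  let φ : X →L[ℂ] ℂ := ⟨LinearMap.proj lam ∘ₗ ι, heval⟩
  have hmaps : MapsTo R (M ⊓ φ.ker : Submodule ℂ X) M := by
    rintro m ⟨hm, hmlam⟩
    obtain ⟨g, hg, hιg⟩ := hM m hm hmlam
    rwa [hinj ((hR m).trans hιg.symm)]
  have hf' : f ∈ (M ⊓ φ.ker).topologicalClosure := topologicalClosure_inf_ker_le M φ ⟨hf, hflam⟩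
  exact ⟨R f, map_mem_closure R.continuous hf' hmaps, hR f⟩

theorem statement7_general [T1Space X] (hinj : Function.Injective ι) (hhol : ∀ f, ι f ∈ HolDisc)
    {S T : X →L[ℂ] X} (hS : ∀ f, ι (S f) = shiftL (ι f)) (hT : ∀ f, ι (T f) = fdivB 0 (ι f))
    (hlam : lam ∈ ball (0 : ℂ) 1) (hunit : IsUnit (1 - lam • T)) {M : Submodule ℂ X}
    (hM : DivisionPropertyAt ι lam M) : DivisionPropertyAt ι lam M.topologicalClosure := by
  obtain ⟨R, hR⟩ := exists_continuousLinearMap_eq_fdivB hhol hT hlam hunit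
  exact hM.topologicalClosure_of_eq_fdivB hinj hR (continuous_apply_of_eq_fdivB hinj hhol hS hR)

end FunctionSpace

/-- (Proposition 3.3) If a linear subspace `M` of `E ∈ 𝓔` has the
division property, then so does its closure in `E`. -/
theorem statement7
    {X : Type*} [NormedAddCommGroup X] [NormedSpace ℂ X] [CompleteSpace X]
    (ι : X →ₗ[ℂ] (ℂ → ℂ)) (hinj : Function.Injective ι)
    (hhol : ∀ f : X, ι f ∈ HolDisc)
    (Sb Tb : X →L[ℂ] X)
    (hSb : ∀ f : X, ι (Sb f) = shiftL (ι f))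
    (hTb : ∀ f : X, ι (Tb f) = fdivB 0 (ι f))
    (hSrad : spectralRadius ℂ Sb ≤ 1) (hTrad : spectralRadius ℂ Tb ≤ 1)
    (M : Submodule ℂ X)
    (hdiv : ∀ f ∈ M, ∀ lam ∈ Metric.ball (0:ℂ) 1,
      ι f lam = 0 → ∃ g ∈ M, ι g = fdivB lam (ι f)) :
    ∀ f ∈ M.topologicalClosure, ∀ lam ∈ Metric.ball (0:ℂ) 1,
      ι f lam = 0 → ∃ g ∈ M.topologicalClosure, ι g = fdivB lam (ι f) := by
  intro f hf lam hlam
  exact statement7_general hinj hhol hSb hTb hlam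
    (isUnit_one_sub_smul_of_spectralRadius_le_one hTrad (mem_ball_zero_iff.mp hlam))
    (fun m hm => hdiv m hm lam hlam) f hf
end
end
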